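/- Suppose there exist constants C > 0 and C_u > 0 such that for every multi-index α ∈ ℕ^d one has ‖∂^α u‖_{L²(D)} ≤ C_u · (C·k)^{|α|} · |α|!. Then u is real-analytic on D, and there exists a constant c > 0 depending only on d such that for every x₀ ∈ D the Taylor series of u at x₀ has radius of convergence at least c/(C·k). -/

import Mathlib

open MeasureTheory

/-- Partial derivative of a function `ℝ^d → ℂ` in the `i`-th coordinate direction. -/
noncomputable def pderivDir (d : ℕ) (i : Fin d) (f : EuclideanSpace ℝ (Fin d) → ℂ) :
    EuclideanSpace ℝ (Fin d) → ℂ :=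
  fun x => fderiv ℝ f x (EuclideanSpace.single i 1)

/-- Iterated partial derivatives along a list of coordinate directions. -/
noncomputable def pderivList (d : ℕ) :
    List (Fin d) → (EuclideanSpace ℝ (Fin d) → ℂ) → EuclideanSpace ℝ (Fin d) → ℂ
  | [], f => f
  | i :: l, f => pderivDir d i (pderivList d l f)

/-- The iterated partial derivative `∂^α` for a multi-index `α : Fin d → ℕ`,
taken in the canonical coordinate order. -/
noncomputable def partialDerivMulti (d : ℕ) (α : Fin d → ℕ)
    (f : EuclideanSpace ℝ (Fin d) → ℂ) : EuclideanSpace ℝ (Fin d) → ℂ :=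
  pderivList d ((List.finRange d).flatMap fun i => List.replicate (α i) i) f

open scoped ENNReal NNReal Topology Nat

lemma aux_oneD {E : Type*} [NormedAddCommGroup E] [NormedSpace ℝ E] [CompleteSpace E]
    {a b : ℝ} (hab : a < b) (hb1 : b - a ≤ 1) {g g' : ℝ → E}
    (hg : ∀ t ∈ Set.Icc a b, HasDerivAt g (g' t) t) (hg' : ContinuousOn g' (Set.Icc a b))
    {t₀ : ℝ} (ht₀ : t₀ ∈ Set.Icc a b) :
    ‖g t₀‖ₑ ≤ (ENNReal.ofReal (b - a))⁻¹ *
      ∫⁻ t in Set.Icc a b, (‖g t‖ₑ + ‖g' t‖ₑ) := by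
  have hgc : ContinuousOn g (Set.Icc a b) := fun t ht => (hg t ht).continuousAt.continuousWithinAt
  have hgm : AEMeasurable (fun t => ‖g t‖ₑ) (volume.restrict (Set.Icc a b)) :=
    (hgc.aestronglyMeasurable measurableSet_Icc).enorm
  set J : ℝ≥0∞ := ∫⁻ t in Set.Icc a b, ‖g' t‖ₑ
  have hvol : volume (Set.Icc a b) = ENNReal.ofReal (b - a) := Real.volume_Icc
  have h0 : ENNReal.ofReal (b - a) ≠ 0 := by simp [hab]
  have htop : ENNReal.ofReal (b - a) ≠ ⊤ := ENNReal.ofReal_ne_top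
  have key : ∀ t ∈ Set.Icc a b, ‖g t₀‖ₑ ≤ ‖g t‖ₑ + J := by
    intro t ht
    have hsub : Set.uIcc t t₀ ⊆ Set.Icc a b := Set.uIcc_subset_Icc ht ht₀
    have hF : ∫ y in t..t₀, g' y = g t₀ - g t :=
      intervalIntegral.integral_eq_sub_of_hasDerivAt (fun y hy => hg y (hsub hy))
        ((hg'.mono hsub).intervalIntegrable)
    have h1 : ‖g t₀ - g t‖ₑ ≤ J := by
      rw [← hF, ← ofReal_norm, intervalIntegral.norm_intervalIntegral_eq,
        ofReal_norm]
      refine (enorm_integral_le_lintegral_enorm _).trans ?_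
      exact lintegral_mono_set (Set.uIoc_subset_uIcc.trans hsub)
    calc ‖g t₀‖ₑ = ‖g t + (g t₀ - g t)‖ₑ := by congr 1; abel
      _ ≤ ‖g t‖ₑ + ‖g t₀ - g t‖ₑ := enorm_add_le _ _
      _ ≤ _ := by gcongr
  have h2 : ‖g t₀‖ₑ * ENNReal.ofReal (b - a) ≤ ∫⁻ t in Set.Icc a b, (‖g t‖ₑ + ‖g' t‖ₑ) := by
    calc ‖g t₀‖ₑ * ENNReal.ofReal (b - a) = ∫⁻ t in Set.Icc a b, ‖g t₀‖ₑ := by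
          rw [setLIntegral_const, hvol]
      _ ≤ ∫⁻ t in Set.Icc a b, (‖g t‖ₑ + J) := setLIntegral_mono' measurableSet_Icc key
      _ = (∫⁻ t in Set.Icc a b, ‖g t‖ₑ) + J * ENNReal.ofReal (b - a) := by
          rw [lintegral_add_right _ measurable_const, setLIntegral_const, hvol]
      _ ≤ (∫⁻ t in Set.Icc a b, ‖g t‖ₑ) + J * 1 := by
          gcongr
          simpa using hb1
      _ = _ := by rw [mul_one, lintegral_add_left' hgm]
  rw [mul_comm, ← div_eq_mul_inv, ENNReal.le_div_iff_mul_le (Or.inl h0) (Or.inl htop)]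
  exact h2

lemma aux_marginal {d : ℕ} (a b : Fin d → ℝ) (K : ℝ≥0∞) (G : ℕ → (Fin d → ℝ) → ℝ≥0∞)
    (hG : ∀ m, Measurable (G m))
    (hstep : ∀ m i, ∀ x ∈ Set.pi Set.univ (fun i => Set.Icc (a i) (b i)),
      G m x ≤ K * ∫⁻ t in Set.Icc (a i) (b i), G (m + 1) (Function.update x i t))
    (s : Finset (Fin d)) : ∀ m, ∀ x ∈ Set.pi Set.univ (fun i => Set.Icc (a i) (b i)),
      G m x ≤ K ^ s.card *
        lmarginal (fun i => volume.restrict (Set.Icc (a i) (b i))) s (G (m + s.card)) x := by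
  induction s using Finset.induction_on with
  | empty => intro m x hx; simp
  | insert i s hi ih =>
    intro m x hx
    rw [lmarginal_insert _ (hG _) hi, Finset.card_insert_of_notMem hi]
    refine (hstep m i x hx).trans ?_
    rw [pow_succ', mul_assoc]
    gcongr
    rw [← lintegral_const_mul _ (by exact ((hG _).lmarginal _).comp (measurable_update x))]
    refine setLIntegral_mono' measurableSet_Icc fun t ht => ?_
    have := ih (m + 1) (Function.update x i t) ?_
    · rwa [add_assoc, add_comm 1] at this
    · intro j _
      by_cases hj : j = i
      · subst hj; simpa using ht
      · simpa [hj] using hx j trivial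

lemma aux_pderivList_contDiffOn {d : ℕ} {D : Set (EuclideanSpace ℝ (Fin d))} (hD : IsOpen D)
    {u : EuclideanSpace ℝ (Fin d) → ℂ} (hu : ContDiffOn ℝ (⊤ : ℕ∞) u D) (l : List (Fin d)) :
    ContDiffOn ℝ (⊤ : ℕ∞) (pderivList d l u) D := by
  induction l with
  | nil => exact hu
  | cons i l ih =>
    exact (ih.fderiv_of_isOpen (m := (⊤ : ℕ∞)) hD (by simp)).clm_apply contDiffOn_const

lemma aux_pderivList_perm {d : ℕ} {D : Set (EuclideanSpace ℝ (Fin d))} (hD : IsOpen D)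
    {u : EuclideanSpace ℝ (Fin d) → ℂ} (hu : ContDiffOn ℝ (⊤ : ℕ∞) u D) {l₁ l₂ : List (Fin d)}
    (h : l₁.Perm l₂) : ∀ x ∈ D, pderivList d l₁ u x = pderivList d l₂ u x := by
  induction h with
  | nil => intro x _; rfl
  | @cons i l₁' l₂' _ ih =>
    intro x hx
    have : pderivList d l₁' u =ᶠ[𝓝 x] pderivList d l₂' u := by
      filter_upwards [hD.mem_nhds hx] with y hy using ih y hy
    simp only [pderivList, pderivDir]
    rw [this.fderiv_eq]
  | swap i j l =>
    intro x hx
    have hc := (aux_pderivList_contDiffOn hD hu l).contDiffAt (hD.mem_nhds hx)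
    have hs : IsSymmSndFDerivAt ℝ (pderivList d l u) x :=
      hc.isSymmSndFDerivAt (by simp only [minSmoothness_of_isRCLikeNormedField]; norm_cast)
    have hd : DifferentiableAt ℝ (fderiv ℝ (pderivList d l u)) x :=
      (hc.fderiv_right (m := 1) (by norm_cast)).differentiableAt (by simp)
    simp only [pderivList]
    unfold pderivDir
    rw [fderiv_clm_apply hd (by fun_prop), fderiv_clm_apply hd (by fun_prop)]
    simpa using hs _ _
  | trans _ _ h1 h2 => intro x hx; rw [h1 x hx, h2 x hx]

lemma aux_iter_eq {d : ℕ} {D : Set (EuclideanSpace ℝ (Fin d))} (hD : IsOpen D)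
    {u : EuclideanSpace ℝ (Fin d) → ℂ} (hu : ContDiffOn ℝ (⊤ : ℕ∞) u D) (n : ℕ) :
    ∀ (v : Fin n → Fin d), ∀ x ∈ D, iteratedFDeriv ℝ n u x (fun j => EuclideanSpace.single (v j) 1)
      = pderivList d (List.ofFn v) u x := by
  induction n with
  | zero => intro v x hx; simp [pderivList]
  | succ n ih =>
    intro v x hx
    have hc := hu.contDiffAt (hD.mem_nhds hx)
    have hd : DifferentiableAt ℝ (iteratedFDeriv ℝ n u) x :=
      (hc.iteratedFDeriv_right (m := 1) (i := n) (by norm_cast; exact le_top)).differentiableAt (by simp)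
    rw [iteratedFDeriv_succ_apply_left, List.ofFn_succ]
    simp only [pderivList, pderivDir]
    have : pderivList d (List.ofFn fun j : Fin n => v j.succ) u =ᶠ[𝓝 x]
        fun y => iteratedFDeriv ℝ n u y (fun j => EuclideanSpace.single (v j.succ) 1) := by
      filter_upwards [hD.mem_nhds hx] with y hy using (ih _ y hy).symm
    rw [this.fderiv_eq]
    have h2 := (ContinuousMultilinearMap.apply ℝ (fun _ : Fin n => EuclideanSpace ℝ (Fin d)) ℂ
      (fun j => EuclideanSpace.single (v j.succ) 1)).hasFDerivAt.comp x hd.hasFDerivAt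
    have h3 := h2.fderiv
    have h4 := congrArg (fun L => L (EuclideanSpace.single (v 0) (1:ℝ))) h3
    exact h4.symm

lemma aux_iter_eq_multi {d : ℕ} {D : Set (EuclideanSpace ℝ (Fin d))} (hD : IsOpen D)
    {u : EuclideanSpace ℝ (Fin d) → ℂ} (hu : ContDiffOn ℝ (⊤ : ℕ∞) u D) (n : ℕ)
    (v : Fin n → Fin d) : ∃ α : Fin d → ℕ, ∑ i, α i = n ∧ ∀ x ∈ D,
      iteratedFDeriv ℝ n u x (fun j => EuclideanSpace.single (v j) 1)
      = partialDerivMulti d α u x := by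
  refine ⟨fun i => (List.ofFn v).count i, ?_, ?_⟩
  · have := Multiset.sum_count_eq_card (s := Finset.univ) (m := (List.ofFn v : Multiset (Fin d))) (by simp)
    simpa using this
  · intro x hx
    rw [aux_iter_eq hD hu n v x hx]
    refine aux_pderivList_perm hD hu ?_ x hx
    rw [List.perm_iff_count]
    intro a
    rw [List.count_flatMap]
    simp [Function.comp_def, List.count_replicate, ← List.ofFn_eq_map, List.sum_ofFn]

lemma aux_norm_le {d n : ℕ}
    (A : ContinuousMultilinearMap ℝ (fun _ : Fin n => EuclideanSpace ℝ (Fin d)) ℂ) :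
    ‖A‖ₑ ≤ ∑ v : Fin n → Fin d, ‖A (fun j => EuclideanSpace.single (v j) 1)‖ₑ := by
  have h : ‖A‖ ≤ ∑ v : Fin n → Fin d, ‖A (fun j => EuclideanSpace.single (v j) 1)‖ := by
    refine A.opNorm_le_bound (by positivity) fun m => ?_
    have hm : m = fun j => ∑ i : Fin d, (m j i) • EuclideanSpace.single i (1:ℝ) := by
      ext j k
      simp [Pi.single_apply]
    conv_lhs => rw [hm]
    rw [A.map_sum, Finset.sum_mul]
    refine (norm_sum_le _ _).trans (Finset.sum_le_sum fun v _ => ?_)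
    rw [A.map_smul_univ (fun j => m j (v j)) (fun j => EuclideanSpace.single (v j) 1), norm_smul,
      mul_comm, norm_prod]
    gcongr with j
    exact PiLp.norm_apply_le _ _
  rw [← ofReal_norm]
  refine (ENNReal.ofReal_le_ofReal h).trans ?_
  rw [ENNReal.ofReal_sum_of_nonneg (fun _ _ => norm_nonneg _)]
  simp

lemma aux_L1 {d : ℕ} {D : Set (EuclideanSpace ℝ (Fin d))} (hD : IsOpen D)
    {u : EuclideanSpace ℝ (Fin d) → ℂ} (hu : ContDiffOn ℝ (⊤ : ℕ∞) u D) (B : ℕ → ℝ)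
    (h : ∀ α : Fin d → ℕ, eLpNorm (partialDerivMulti d α u) 2 (volume.restrict D)
      ≤ ENNReal.ofReal (B (∑ i, α i))) (n : ℕ) :
    ∫⁻ x in D, ‖iteratedFDeriv ℝ n u x‖ₑ ≤
      (d : ℝ≥0∞) ^ n * (ENNReal.ofReal (B n) * volume D ^ (1 / 2 : ℝ)) := by
  have hm : ∀ l, AEStronglyMeasurable (pderivList d l u) (volume.restrict D) := fun l =>
    (aux_pderivList_contDiffOn hD hu l).continuousOn.aestronglyMeasurable hD.measurableSet
  choose α hα1 hα2 using aux_iter_eq_multi hD hu n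
  calc ∫⁻ x in D, ‖iteratedFDeriv ℝ n u x‖ₑ
      ≤ ∫⁻ x in D, ∑ v : Fin n → Fin d, ‖partialDerivMulti d (α v) u x‖ₑ := by
        refine setLIntegral_mono' hD.measurableSet fun x hx => ?_
        refine (aux_norm_le _).trans (le_of_eq ?_)
        exact Finset.sum_congr rfl fun v _ => by rw [hα2 v x hx]
    _ = ∑ v : Fin n → Fin d, ∫⁻ x in D, ‖partialDerivMulti d (α v) u x‖ₑ :=
        lintegral_finsetSum' _ fun v _ => (hm _).enorm
    _ ≤ ∑ v : Fin n → Fin d, ENNReal.ofReal (B n) * volume D ^ (1 / 2 : ℝ) := by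
        refine Finset.sum_le_sum fun v _ => ?_
        rw [← eLpNorm_one_eq_lintegral_enorm]
        refine (eLpNorm_le_eLpNorm_mul_rpow_measure_univ (q := 2) (by norm_num) (hm _)).trans ?_
        rw [Measure.restrict_apply_univ]
        have e : 1 / (1 : ℝ≥0∞).toReal - 1 / (2 : ℝ≥0∞).toReal = 1 / 2 := by norm_num
        rw [e]
        gcongr
        have := h (α v)
        rwa [hα1] at this
    _ = _ := by simp

lemma aux_contAt {d : ℕ} {D : Set (EuclideanSpace ℝ (Fin d))} (hD : IsOpen D)
    {u : EuclideanSpace ℝ (Fin d) → ℂ} (hu : ContDiffOn ℝ (⊤ : ℕ∞) u D) (n : ℕ)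
    {x : EuclideanSpace ℝ (Fin d)} (hx : x ∈ D) :
    ContDiffAt ℝ 1 (iteratedFDeriv ℝ n u) x :=
  (hu.contDiffAt (hD.mem_nhds hx)).iteratedFDeriv_right (m := 1) (i := n)
    (by norm_cast; exact le_top)

lemma aux_ptwise {d : ℕ} {D : Set (EuclideanSpace ℝ (Fin d))} (hD : IsOpen D)
    {u : EuclideanSpace ℝ (Fin d) → ℂ} (hu : ContDiffOn ℝ (⊤ : ℕ∞) u D) {M A : ℝ} (hM : 0 ≤ M)
    (hA : 0 ≤ A)
    (hL : ∀ n, ∫⁻ x in D, ‖iteratedFDeriv ℝ n u x‖ₑ ≤ ENNReal.ofReal (M * A ^ n * n !))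
    {x₀ : EuclideanSpace ℝ (Fin d)} (hx₀ : x₀ ∈ D) :
    ∃ ρ > 0, ∃ M' : ℝ, 0 ≤ M' ∧ Metric.ball x₀ ρ ⊆ D ∧ ∀ n, ∀ x ∈ Metric.ball x₀ ρ,
      ‖iteratedFDeriv ℝ n u x‖ ≤ M' * (2 * A) ^ n * n ! := by
  set e : (Fin d → ℝ) → EuclideanSpace ℝ (Fin d) := WithLp.toLp 2 with he
  have hec : Continuous e := PiLp.continuous_toLp 2 _
  have hpre : e ⁻¹' D ∈ 𝓝 (x₀.ofLp) := (hD.preimage hec).mem_nhds hx₀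
  obtain ⟨ρ', hρ', hball⟩ := Metric.nhds_basis_closedBall.mem_iff.1 hpre
  set ρ := min ρ' (1 / 2) with hρdef
  have hρ : 0 < ρ := by positivity
  have hρ2 : ρ ≤ 1 / 2 := min_le_right _ _
  set a : Fin d → ℝ := fun i => x₀ i - ρ with ha
  set b : Fin d → ℝ := fun i => x₀ i + ρ with hb
  set Box : Set (Fin d → ℝ) := Set.pi Set.univ (fun i => Set.Icc (a i) (b i)) with hBox
  have hBm : MeasurableSet Box := MeasurableSet.univ_pi fun i => measurableSet_Icc
  have hBD : ∀ y ∈ Box, e y ∈ D := by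
    intro y hy
    refine hball ?_
    rw [Metric.mem_closedBall, dist_pi_le_iff hρ'.le]
    intro i
    have := hy i trivial
    rw [Real.dist_eq, abs_le]
    simp only [ha, hb, Set.mem_Icc] at this
    have h3 : ρ ≤ ρ' := min_le_left _ _
    constructor <;> linarith [this.1, this.2]
  have hballBox : ∀ x ∈ Metric.ball x₀ ρ, x.ofLp ∈ Box := by
    intro x hx i _
    have h1 := PiLp.norm_apply_le (x - x₀) i
    rw [Metric.mem_ball, dist_eq_norm] at hx
    have h2 := h1.trans hx.le
    rw [Real.norm_eq_abs, abs_le] at h2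
    simp only [PiLp.sub_apply] at h2
    simp only [ha, hb, Set.mem_Icc]
    constructor <;> linarith [h2.1, h2.2]
  have hballD : Metric.ball x₀ ρ ⊆ D := fun x hx => hBD _ (hballBox x hx)
  let h : ℕ → (Fin d → ℝ) → ℝ≥0∞ := fun j => Box.indicator fun y => ‖iteratedFDeriv ℝ j u (e y)‖ₑ
  have hcont : ∀ j, ∀ x ∈ D, ContinuousAt (iteratedFDeriv ℝ j u) x := fun j x hx =>
    (aux_contAt hD hu j hx).continuousAt
  have hhm : ∀ j, Measurable (h j) := by
    intro j
    have hc : ContinuousOn (fun y => ‖iteratedFDeriv ℝ j u (e y)‖ₑ) Box := fun y hy =>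
      (((hcont j _ (hBD y hy)).comp hec.continuousAt).enorm).continuousWithinAt
    classical
    have := hc.measurable_piecewise (g := 0) continuousOn_const hBm
    rwa [Set.piecewise_eq_indicator] at this
  let K : ℝ≥0∞ := (ENNReal.ofReal (2 * ρ))⁻¹ * 2
  have hpt : ∀ n, ∀ y ∈ Box, ‖iteratedFDeriv ℝ n u (e y)‖ₑ ≤ K ^ d *
      ∑ j ∈ Finset.range (d + 1), ∫⁻ x in D, ‖iteratedFDeriv ℝ (n + j) u x‖ₑ := by
    intro n y hy
    let G : ℕ → (Fin d → ℝ) → ℝ≥0∞ := fun m y => (Finset.range (m + 1)).sup fun j => h (n + j) y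
    have hGm : ∀ m, Measurable (G m) := fun m => by
      have := Finset.measurable_range_sup'' (f := fun j => h (n + j)) (n := m) (fun j _ => hhm _)
      simpa only [Finset.sup'_eq_sup] using this
    have hstep : ∀ m i, ∀ x ∈ Box,
        G m x ≤ K * ∫⁻ t in Set.Icc (a i) (b i), G (m + 1) (Function.update x i t) := by
      intro m i x hx
      refine Finset.sup_le fun j hj => ?_
      have hup : ∀ t ∈ Set.Icc (a i) (b i), Function.update x i t ∈ Box := by
        intro t ht l _
        by_cases hl : l = i
        · subst hl; simpa using ht
        · simpa [hl] using hx l trivial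
      have hder : ∀ t, HasDerivAt (fun t => e (Function.update x i t)) (EuclideanSpace.single i 1) t := by
        intro t
        have h1 := hasDerivAt_update x i t
        have h2 := (PiLp.hasFDerivAt_toLp (𝕜 := ℝ) 2 (Function.update x i t)).comp_hasDerivAt t h1
        exact h2
      have hone := aux_oneD (a := a i) (b := b i) (by simp only [ha, hb]; linarith)
        (by simp only [ha, hb]; linarith)
        (g := fun t => iteratedFDeriv ℝ (n + j) u (e (Function.update x i t)))
        (g' := fun t => fderiv ℝ (iteratedFDeriv ℝ (n + j) u) (e (Function.update x i t))
          (EuclideanSpace.single i 1)) ?_ ?_ (hx i trivial)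
      · have hba : b i - a i = 2 * ρ := by simp only [ha, hb]; ring
        rw [hba] at hone
        simp only [Function.update_eq_self] at hone
        have : h (n + j) x = ‖iteratedFDeriv ℝ (n + j) u (e x)‖ₑ := Set.indicator_of_mem hx _
        rw [this]
        refine hone.trans ?_
        simp only [K]
        rw [mul_assoc, ← lintegral_const_mul (f := fun t => G (m + 1) (Function.update x i t)) _
          (by exact (hGm _).comp (measurable_update x))]
        gcongr 1
        refine setLIntegral_mono' measurableSet_Icc fun t ht => ?_
        have hj' := Finset.mem_range.1 hj
        have e1 : ‖iteratedFDeriv ℝ (n + j) u (e (Function.update x i t))‖ₑ ≤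
            G (m + 1) (Function.update x i t) := by
          refine le_trans (le_of_eq ?_) (Finset.le_sup (b := j) (Finset.mem_range.2 (by omega)))
          exact (Set.indicator_of_mem (hup t ht)
            (fun y => ‖iteratedFDeriv ℝ (n + j) u (e y)‖ₑ)).symm
        have e2 : ‖iteratedFDeriv ℝ (n + (j + 1)) u (e (Function.update x i t))‖ₑ ≤
            G (m + 1) (Function.update x i t) := by
          refine le_trans (le_of_eq ?_) (Finset.le_sup (b := j + 1) (Finset.mem_range.2 (by omega)))
          exact (Set.indicator_of_mem (hup t ht)
            (fun y => ‖iteratedFDeriv ℝ (n + (j + 1)) u (e y)‖ₑ)).symm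
        rw [two_mul]
        refine add_le_add e1 (le_trans ?_ e2)
        rw [← ofReal_norm, ← ofReal_norm, ← add_assoc, ← norm_fderiv_iteratedFDeriv]
        refine ENNReal.ofReal_le_ofReal ?_
        refine (ContinuousLinearMap.le_opNorm _ _).trans ?_
        simp
      · intro t ht
        exact ((aux_contAt hD hu (n + j) (hBD _ (hup t ht))).differentiableAt
          (by simp)).hasFDerivAt.comp_hasDerivAt t (hder t)
      · intro t ht
        have h1 : ContinuousAt (fderiv ℝ (iteratedFDeriv ℝ (n + j) u)) (e (Function.update x i t)) :=
          ((aux_contAt hD hu (n + j) (hBD _ (hup t ht))).fderiv_right (m := 0)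
            (by simp)).continuousAt
        exact ((ContinuousAt.comp (f := fun t => e (Function.update x i t)) h1 (hder t).continuousAt).clm_apply continuousAt_const).continuousWithinAt
    have hmar := aux_marginal a b K G hGm hstep Finset.univ 0 y hy
    have h0 : ‖iteratedFDeriv ℝ n u (e y)‖ₑ ≤ G 0 y := by
      refine le_trans (le_of_eq ?_) (Finset.le_sup (b := 0) (by simp))
      exact (Set.indicator_of_mem hy (fun y => ‖iteratedFDeriv ℝ n u (e y)‖ₑ)).symm
    refine h0.trans (hmar.trans ?_)
    simp only [lmarginal_univ, Finset.card_univ, Fintype.card_fin, zero_add]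
    gcongr 1
    have hpi : Measure.pi (fun i => (volume : Measure ℝ).restrict (Set.Icc (a i) (b i))) =
        (volume : Measure (Fin d → ℝ)).restrict Box := by
      rw [volume_pi, hBox, Measure.restrict_pi_pi]
    rw [hpi, ← lintegral_finsetSum' _ ?_]
    swap
    · intro j _
      have : ContinuousOn (fun x => iteratedFDeriv ℝ (n + j) u x) D := fun x hx =>
        (hcont _ x hx).continuousWithinAt
      exact (this.aestronglyMeasurable hD.measurableSet).enorm
    rw [← (PiLp.volume_preserving_toLp (Fin d)).setLIntegral_comp_preimage_emb
      (MeasurableEquiv.toLp 2 _).measurableEmbedding]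
    refine le_trans ?_ (lintegral_mono_set (s := Box) (fun y hy => hBD y hy))
    refine setLIntegral_mono' hBm fun z hz => ?_
    refine Finset.sup_le fun j hj => ?_
    have : h (n + j) z = ‖iteratedFDeriv ℝ (n + j) u (e z)‖ₑ := Set.indicator_of_mem hz _
    rw [this]
    exact Finset.single_le_sum (f := fun j => ‖iteratedFDeriv ℝ (n + j) u (e z)‖ₑ)
      (fun _ _ => zero_le) hj
  have hK : K = ENNReal.ofReal (ρ⁻¹) := by
    simp only [K]
    rw [← ENNReal.ofReal_inv_of_pos (by positivity), show (2:ℝ≥0∞) = ENNReal.ofReal 2 by simp,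
      ← ENNReal.ofReal_mul (by positivity)]
    congr 1
    field_simp
  refine ⟨ρ, hρ, ρ⁻¹ ^ d * ∑ j ∈ Finset.range (d + 1), M * (2 * A) ^ j * j !, by positivity, hballD,
    fun n x hx => ?_⟩
  have h1 := hpt n x.ofLp (hballBox x hx)
  have h2 : ‖iteratedFDeriv ℝ n u x‖ₑ ≤ ENNReal.ofReal (ρ⁻¹ ^ d *
      ∑ j ∈ Finset.range (d + 1), M * A ^ (n + j) * (n + j)!) := by
    refine h1.trans ?_
    rw [ENNReal.ofReal_mul (by positivity), hK, ENNReal.ofReal_pow (by positivity),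
      ENNReal.ofReal_sum_of_nonneg (fun _ _ => by positivity)]
    gcongr with j
    exact hL _
  rw [← ofReal_norm, ENNReal.ofReal_le_ofReal_iff (by positivity)] at h2
  refine h2.trans ?_
  rw [mul_assoc (_ * _), mul_assoc, Finset.sum_mul]
  refine mul_le_mul_of_nonneg_left (Finset.sum_le_sum fun j hj => ?_) (by positivity)
  have h3 : ((n + j)! : ℝ) ≤ 2 ^ (n + j) * n ! * j ! := by
    have : (n + j)! ≤ 2 ^ (n + j) * n ! * j ! := by
      rw [← Nat.add_choose_mul_factorial_mul_factorial]
      gcongr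
      exact Nat.choose_le_two_pow _ _
    exact_mod_cast this
  calc M * A ^ (n + j) * (n + j)! ≤ M * A ^ (n + j) * (2 ^ (n + j) * n ! * j !) := by gcongr
    _ = _ := by rw [mul_pow, mul_pow, pow_add, pow_add]; ring

lemma aux_taylor {E : Type*} [NormedAddCommGroup E] [NormedSpace ℝ E] {u : E → ℂ} {x₀ : E}
    {ρ M R : ℝ} (hρ : 0 < ρ) (hR : 0 < R) (hM : 0 ≤ M)
    (hu : ContDiffOn ℝ (⊤ : ℕ∞) u (Metric.ball x₀ ρ))
    (hb : ∀ n, ∀ x ∈ Metric.ball x₀ ρ, ‖iteratedFDeriv ℝ n u x‖ ≤ M * R ^ n * n !) :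
    ∃ p : FormalMultilinearSeries ℝ E ℂ,
      HasFPowerSeriesAt u p x₀ ∧ ENNReal.ofReal (1 / R) ≤ p.radius := by
  let p : FormalMultilinearSeries ℝ E ℂ := fun n => (n ! : ℝ)⁻¹ • iteratedFDeriv ℝ n u x₀
  have hrad : ENNReal.ofReal (1 / R) ≤ p.radius := by
    refine p.le_radius_of_bound M fun n => ?_
    rw [Real.coe_toNNReal _ (by positivity)]
    have h1 := hb n x₀ (Metric.mem_ball_self hρ)
    have h2 : ‖p n‖ ≤ M * R ^ n := by
      simp only [p]
      rw [norm_smul, norm_inv, Real.norm_natCast, inv_mul_le_iff₀ (by positivity)]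
      linarith
    calc ‖p n‖ * (1 / R) ^ n ≤ M * R ^ n * (1 / R) ^ n := by gcongr
      _ = M := by rw [mul_assoc, ← mul_pow, mul_one_div_cancel hR.ne', one_pow, mul_one]
  refine ⟨p, ⟨ENNReal.ofReal (min ρ (1 / R)), ?_, ENNReal.ofReal_pos.2 (by positivity), ?_⟩, hrad⟩
  · exact (ENNReal.ofReal_le_ofReal (min_le_right _ _)).trans hrad
  intro y hy
  have hsum : Summable fun n => p n fun _ => y :=
    p.summable (Metric.eball_subset_eball
      ((ENNReal.ofReal_le_ofReal (min_le_right _ _)).trans hrad) hy)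
  rw [Metric.eball_ofReal, mem_ball_zero_iff, lt_min_iff] at hy
  obtain ⟨hy1, hy2⟩ := hy
  have hseg : ∀ t ∈ Set.Icc (0:ℝ) 1, x₀ + t • y ∈ Metric.ball x₀ ρ := by
    intro t ht
    rw [Metric.mem_ball, dist_eq_norm, add_sub_cancel_left, norm_smul, Real.norm_eq_abs,
      abs_of_nonneg ht.1]
    calc t * ‖y‖ ≤ 1 * ‖y‖ := by gcongr; exact ht.2
      _ < ρ := by linarith
  let g : ℝ → ℂ := fun t => u (x₀ + t • y)
  have hlin : ∀ t : ℝ, HasDerivAt (fun t : ℝ => x₀ + t • y) y t := fun t => by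
    simpa using ((hasDerivAt_id t).smul_const y).const_add x₀
  have hiter : ∀ n, ∀ t ∈ Set.Icc (0:ℝ) 1, iteratedDerivWithin n g (Set.Icc 0 1) t =
      iteratedFDeriv ℝ n u (x₀ + t • y) fun _ => y := by
    intro n
    induction n with
    | zero => intro t ht; simp [g]
    | succ n ih =>
      intro t ht
      rw [iteratedDerivWithin_succ, derivWithin_congr (fun s hs => ih s hs) (ih t ht)]
      have hd : DifferentiableAt ℝ (iteratedFDeriv ℝ n u) (x₀ + t • y) :=
        ((hu.contDiffAt (Metric.isOpen_ball.mem_nhds (hseg t ht))).iteratedFDeriv_right (m := 1)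
          (i := n) (by norm_cast; exact le_top)).differentiableAt (by simp)
      have h1 := hd.hasFDerivAt.comp_hasDerivAt t (hlin t)
      have h2 := (ContinuousMultilinearMap.apply ℝ (fun _ : Fin n => E) ℂ
        (fun _ => y)).hasFDerivAt.comp_hasDerivAt t h1
      rw [iteratedFDeriv_succ_apply_left]
      exact h2.hasDerivWithinAt.derivWithin (uniqueDiffOn_Icc_zero_one t ht)
  have hgc : ContDiffOn ℝ (⊤ : ℕ∞) g (Set.Icc 0 1) :=
    hu.comp (by fun_prop) hseg
  have hT : ∀ n, ‖u (x₀ + y) - ∑ k ∈ Finset.range (n + 1), p k fun _ => y‖ ≤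
      M * (((n + 1 : ℕ) : ℝ) * (R * ‖y‖) ^ (n + 1)) := by
    intro n
    have h1 := taylor_mean_remainder_bound (f := g) (a := 0) (b := 1) (x := 1) (n := n)
      (C := M * R ^ (n + 1) * (n + 1)! * ‖y‖ ^ (n + 1)) zero_le_one
      (hgc.of_le (by norm_cast; exact le_top)) (by simp) (fun t ht => by
        rw [hiter _ t ht]
        refine (ContinuousMultilinearMap.le_opNorm _ _).trans ?_
        simp only [Finset.prod_const, Finset.card_univ, Fintype.card_fin]
        gcongr
        exact hb _ _ (hseg t ht))
    rw [taylor_within_apply] at h1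
    have h2 : ∑ k ∈ Finset.range (n + 1), ((k ! : ℝ)⁻¹ * (1 - 0) ^ k) •
        iteratedDerivWithin k g (Set.Icc 0 1) 0 = ∑ k ∈ Finset.range (n + 1), p k fun _ => y := by
      refine Finset.sum_congr rfl fun k _ => ?_
      rw [hiter k 0 (by simp)]
      simp [p]
    rw [h2] at h1
    simp only [g, one_smul] at h1
    refine h1.trans (le_of_eq ?_)
    rw [Nat.factorial_succ, mul_pow]
    push_cast
    field_simp
    ring
  have hq : R * ‖y‖ < 1 := by
    rw [lt_div_iff₀ hR] at hy2; linarith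
  have hlim : Filter.Tendsto (fun n : ℕ => ∑ k ∈ Finset.range n, p k fun _ => y) Filter.atTop
      (𝓝 (u (x₀ + y))) := by
    rw [← Filter.tendsto_add_atTop_iff_nat 1, tendsto_iff_norm_sub_tendsto_zero]
    have h0 := ((tendsto_self_mul_const_pow_of_lt_one (r := R * ‖y‖) (by positivity) hq).comp
      (Filter.tendsto_add_atTop_nat 1)).const_mul M
    rw [mul_zero] at h0
    refine squeeze_zero (fun _ => norm_nonneg _) (fun n => ?_) h0
    rw [norm_sub_rev]
    exact hT n
  have := tendsto_nhds_unique hsum.hasSum.tendsto_sum_nat hlim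
  rw [← this]
  exact hsum.hasSum

/-- If `‖∂^α u‖_{L²(D)} ≤ C_u (C k)^{|α|} |α|!` for every multi-index `α`,
then `u` is real-analytic on the bounded open set `D`, and there is a constant `c > 0`
depending only on `d` such that the Taylor series of `u` at every point of `D` has
radius of convergence at least `c / (C k)`. -/
theorem analytic_of_kpow_factorial_derivative_bounds
    (d : ℕ) (hd : 1 ≤ d) :
    ∃ c : ℝ, 0 < c ∧
      ∀ (D : Set (EuclideanSpace ℝ (Fin d))), IsOpen D → Bornology.IsBounded D →
      ∀ (k : ℝ), 1 ≤ k →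
      ∀ (u : EuclideanSpace ℝ (Fin d) → ℂ), ContDiffOn ℝ (⊤ : ℕ∞) u D →
      ∀ (C Cu : ℝ), 0 < C → 0 < Cu →
      (∀ α : Fin d → ℕ,
        eLpNorm (partialDerivMulti d α u) 2 (volume.restrict D)
          ≤ ENNReal.ofReal
              (Cu * (C * k) ^ (∑ i, α i) * (Nat.factorial (∑ i, α i) : ℝ))) →
      (∀ x ∈ D, AnalyticAt ℝ u x) ∧
        ∀ x₀ ∈ D, ∃ p : FormalMultilinearSeries ℝ (EuclideanSpace ℝ (Fin d)) ℂ,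
          HasFPowerSeriesAt u p x₀ ∧ ENNReal.ofReal (c / (C * k)) ≤ p.radius := by
  have hd0 : (0:ℝ) < d := by exact_mod_cast hd
  refine ⟨1 / (2 * d), by positivity, ?_⟩
  intro D hD hDb k hk u hu C Cu hC hCu h
  have hk0 : 0 < k := by linarith
  have main : ∀ x₀ ∈ D, ∃ p : FormalMultilinearSeries ℝ (EuclideanSpace ℝ (Fin d)) ℂ,
      HasFPowerSeriesAt u p x₀ ∧ ENNReal.ofReal (1 / (2 * d) / (C * k)) ≤ p.radius := by
    intro x₀ hx₀
    have hL := aux_L1 hD hu (fun n => Cu * (C * k) ^ n * (n ! : ℝ)) h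
    have hV : volume D ^ (1 / 2 : ℝ) ≠ ⊤ :=
      ENNReal.rpow_ne_top_of_nonneg (by norm_num) hDb.measure_lt_top.ne
    set V := (volume D ^ (1 / 2 : ℝ)).toReal with hVdef
    have hV0 : 0 ≤ V := ENNReal.toReal_nonneg
    have hL' : ∀ n, ∫⁻ x in D, ‖iteratedFDeriv ℝ n u x‖ₑ ≤
        ENNReal.ofReal ((Cu * V) * (d * (C * k)) ^ n * n !) := by
      intro n
      refine (hL n).trans (le_of_eq ?_)
      rw [← ENNReal.ofReal_toReal hV, ← ENNReal.ofReal_natCast d, ← ENNReal.ofReal_pow hd0.le,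
        ← ENNReal.ofReal_mul (by positivity), ← ENNReal.ofReal_mul (by positivity), ← hVdef, mul_pow]
      congr 1
      ring
    obtain ⟨ρ, hρ, M', hM', hsub, hbd⟩ :=
      aux_ptwise hD hu (M := Cu * V) (A := d * (C * k)) (by positivity) (by positivity) hL' hx₀
    have := aux_taylor hρ (R := 2 * (d * (C * k))) (by positivity) hM' (hu.mono hsub) hbd
    have e : 1 / (2 * (d * (C * k))) = 1 / (2 * d) / (C * k) := by field_simp
    rwa [e] at this
  refine ⟨fun x hx => ?_, main⟩
  obtain ⟨p, hp, _⟩ := main x hx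
  exact ⟨p, hp⟩
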